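/- Assume S is infinite and let 𝒦 be a simplicial complex over S all of whose faces have cardinality at most n+1 for some n ≥ 0. Then d(𝒦, 𝒫*_f(S)) = 1, where 𝒫*_f(S) is the simplicial complex of all nonempty finite subsets of S. Consequently, the union of the finite-dimensional complexes is not dense in the space of all simplicial complexes over S. -/

import Mathlib

open scoped BigOperators

/-- A simplicial complex over the vertex set `S`: a nonempty collection of
nonempty finite subsets of `S`, closed under taking nonempty subsets. -/
def IsSimplicialComplex {S : Type*} (K : Set (Finset S)) : Prop :=
  K.Nonempty ∧ (∀ F ∈ K, F.Nonempty) ∧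
    ∀ F ∈ K, ∀ G : Finset S, G.Nonempty → G ⊆ F → G ∈ K

/-- Halved ℓ¹ distance between finitely supported real functions:
`d(α,β) = (1/2) ∑ₛ |α s - β s|`. -/
noncomputable def l1dist {S : Type*} (α β : S →₀ ℝ) : ℝ :=
  (1 / 2) * (α - β).sum fun _ x => |x|

/-- The ℓ¹ geometric realization of a collection `K` of finite subsets of `S`:
finitely supported probability vectors whose support is a face of `K`. -/
def realization {S : Type*} (K : Set (Finset S)) : Set (S →₀ ℝ) :=
  {α | (∀ s, 0 ≤ α s) ∧ (α.sum fun _ x => x) = 1 ∧ α.support ∈ K}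

/-- Distance from a point to a set of finitely supported functions. -/
noncomputable def distToSet {S : Type*} (α : S →₀ ℝ) (X : Set (S →₀ ℝ)) : ℝ :=
  sInf (l1dist α '' X)

/-- One-sided Hausdorff distance between (the realizations of) two complexes. -/
noncomputable def hdelta {S : Type*} (K₁ K₂ : Set (Finset S)) : ℝ :=
  sSup ((fun α => distToSet α (realization K₂)) '' realization K₁)

/-- Hausdorff distance between (the realizations of) two simplicial complexes. -/
noncomputable def hdist {S : Type*} (K₁ K₂ : Set (Finset S)) : ℝ :=
  max (hdelta K₁ K₂) (hdelta K₂ K₁)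

/-- `d(F, K)`: supremum of distances to `|K|₁` over probability vectors
supported exactly on `F`. -/
noncomputable def dFace {S : Type*} (F : Finset S) (K : Set (Finset S)) : ℝ :=
  sSup ((fun α => distToSet α (realization K)) ''
    {α : S →₀ ℝ | (∀ s, 0 ≤ α s) ∧ (α.sum fun _ x => x) = 1 ∧ α.support = F})

/-- The `n`-skeleton of a simplicial complex. -/
def skeleton {S : Type*} (n : ℕ) (K : Set (Finset S)) : Set (Finset S) :=
  {F | F ∈ K ∧ F.card ≤ n + 1}

/-!
For probability vectors `α` and `β`, the distance `d(α, β)` is `1 - ∑ₛ min (α s) (β s)`. It is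
therefore at most `1`, and it is at least `1 - n / |F|` when `α` is the barycenter of a face `F`
and `β` has at most `n` vertices in its support. Letting `|F|` tend to infinity gives distance `1`.
-/

section Distance

variable {S : Type*} {K L : Set (Finset S)} {α β : S →₀ ℝ}

theorem l1dist_nonneg (α β : S →₀ ℝ) : 0 ≤ l1dist α β :=
  mul_nonneg (by norm_num) (Finset.sum_nonneg fun _ _ => abs_nonneg _)

theorem l1dist_eq_sum_of_support_subset {T : Finset S} (hα : α.support ⊆ T)
    (hβ : β.support ⊆ T) : l1dist α β = (1 / 2) * ∑ s ∈ T, |α s - β s| := by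
  classical
  have hT : (α - β).support ⊆ T := Finsupp.support_sub.trans (Finset.union_subset hα hβ)
  rw [l1dist, Finsupp.sum_of_support_subset _ hT _ fun _ _ => abs_zero]
  simp only [Finsupp.sub_apply]

theorem sum_eq_one_of_mem_realization {T : Finset S} (hα : α ∈ realization K)
    (hT : α.support ⊆ T) : ∑ s ∈ T, α s = 1 := by
  rw [← hα.2.1, Finsupp.sum_of_support_subset _ hT _ fun _ _ => rfl]

theorem l1dist_eq_one_sub_sum_min (hα : α ∈ realization K) (hβ : β ∈ realization L) :
    l1dist α β = 1 - ∑ s ∈ β.support, min (α s) (β s) := by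
  classical
  have hαT : α.support ⊆ α.support ∪ β.support := Finset.subset_union_left
  have hβT : β.support ⊆ α.support ∪ β.support := Finset.subset_union_right
  have abs_sub_eq (s : S) : |α s - β s| = α s + β s - 2 * min (α s) (β s) := by
    linarith [min_add_max (α s) (β s), max_sub_min_eq_abs (β s) (α s), min_comm (α s) (β s),
      max_comm (α s) (β s)]
  have min_eq_zero (s : S) (hs : s ∉ β.support) : min (α s) (β s) = 0 := by
    rw [Finsupp.notMem_support_iff.1 hs, min_eq_right (hα.1 s)]
  rw [l1dist_eq_sum_of_support_subset hαT hβT,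
    Finset.sum_subset hβT fun s _ hs => min_eq_zero s hs]
  simp only [abs_sub_eq, Finset.sum_sub_distrib, Finset.sum_add_distrib, ← Finset.mul_sum,
    sum_eq_one_of_mem_realization hα hαT, sum_eq_one_of_mem_realization hβ hβT]
  ring

theorem l1dist_le_one (hα : α ∈ realization K) (hβ : β ∈ realization L) : l1dist α β ≤ 1 := by
  rw [l1dist_eq_one_sub_sum_min hα hβ]
  exact sub_le_self 1 (Finset.sum_nonneg fun s _ => le_min (hα.1 s) (hβ.1 s))

theorem one_sub_card_mul_le_l1dist {c : ℝ} (hα : α ∈ realization K) (hβ : β ∈ realization L)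
    (hc : ∀ s, α s ≤ c) : 1 - β.support.card * c ≤ l1dist α β := by
  rw [l1dist_eq_one_sub_sum_min hα hβ, ← nsmul_eq_mul]
  exact sub_le_sub_left
    (Finset.sum_le_card_nsmul _ _ _ fun s _ => (min_le_left _ _).trans (hc s)) 1

theorem distToSet_le_l1dist {X : Set (S →₀ ℝ)} (hβ : β ∈ X) : distToSet α X ≤ l1dist α β :=
  csInf_le ⟨0, Set.forall_mem_image.2 fun γ _ => l1dist_nonneg α γ⟩ (Set.mem_image_of_mem _ hβ)

theorem distToSet_realization_le_one (hα : α ∈ realization K) (hL : (realization L).Nonempty) :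
    distToSet α (realization L) ≤ 1 :=
  let ⟨_, hβ⟩ := hL
  (distToSet_le_l1dist hβ).trans (l1dist_le_one hα hβ)

theorem hdelta_le_one (hL : (realization L).Nonempty) : hdelta K L ≤ 1 :=
  Real.sSup_le (Set.forall_mem_image.2 fun _ hα => distToSet_realization_le_one hα hL) zero_le_one

theorem distToSet_le_hdelta (hα : α ∈ realization K) (hL : (realization L).Nonempty) :
    distToSet α (realization L) ≤ hdelta K L :=
  le_csSup ⟨1, Set.forall_mem_image.2 fun _ hγ => distToSet_realization_le_one hγ hL⟩
    (Set.mem_image_of_mem _ hα)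

end Distance

section Barycenter

variable {S : Type*} {K L : Set (Finset S)} {F : Finset S}

/-- The barycenter of the simplex with vertex set `F`: the uniform probability vector on `F`, from
which small faces are far away. For `F = ∅` it is the zero function. -/
noncomputable def barycenter (F : Finset S) : S →₀ ℝ :=
  Finsupp.indicator F fun _ _ => (F.card : ℝ)⁻¹

theorem barycenter_apply [DecidableEq S] (F : Finset S) (s : S) :
    barycenter F s = if s ∈ F then (F.card : ℝ)⁻¹ else 0 := by
  rw [barycenter, Finsupp.indicator_apply, dite_eq_ite]

theorem barycenter_nonneg (F : Finset S) (s : S) : 0 ≤ barycenter F s := by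
  classical
  rw [barycenter_apply]
  positivity

theorem barycenter_le_inv_card (F : Finset S) (s : S) : barycenter F s ≤ (F.card : ℝ)⁻¹ := by
  classical
  rw [barycenter_apply]
  split_ifs
  · exact le_rfl
  · positivity

theorem support_barycenter (F : Finset S) : (barycenter F).support = F := by
  classical
  ext s
  rw [Finsupp.mem_support_iff, barycenter_apply, ite_ne_right_iff, and_iff_left_iff_imp]
  exact fun hs => inv_ne_zero (Nat.cast_ne_zero.2 (Finset.card_ne_zero_of_mem hs))

theorem sum_barycenter (hF : F.Nonempty) : ((barycenter F).sum fun _ x => x) = 1 := by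
  rw [barycenter, Finsupp.sum_indicator_index _ fun _ _ => rfl, Finset.sum_const, nsmul_eq_mul]
  exact mul_inv_cancel₀ (Nat.cast_ne_zero.2 hF.card_ne_zero)

theorem barycenter_mem_realization (hFK : F ∈ K) (hF : F.Nonempty) :
    barycenter F ∈ realization K :=
  ⟨barycenter_nonneg F, sum_barycenter hF, (support_barycenter F).symm ▸ hFK⟩

theorem realization_nonempty (hK : ∃ F ∈ K, F.Nonempty) : (realization K).Nonempty :=
  let ⟨F, hFK, hF⟩ := hK
  ⟨barycenter F, barycenter_mem_realization hFK hF⟩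

theorem one_sub_div_card_le_distToSet_barycenter {n : ℕ} (hF : F.Nonempty)
    (hK : (realization K).Nonempty) (hn : ∀ G ∈ K, G.card ≤ n) :
    1 - (n : ℝ) / F.card ≤ distToSet (barycenter F) (realization K) := by
  refine le_csInf (hK.image _) (Set.forall_mem_image.2 fun β hβ => ?_)
  have hcard : (β.support.card : ℝ) ≤ n := Nat.cast_le.2 (hn _ hβ.2.2)
  calc 1 - (n : ℝ) / F.card
      ≤ 1 - β.support.card * (F.card : ℝ)⁻¹ := by rw [div_eq_mul_inv]; gcongr
    _ ≤ l1dist (barycenter F) β :=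
      one_sub_card_mul_le_l1dist (barycenter_mem_realization (Set.mem_singleton F) hF) hβ
        (barycenter_le_inv_card F)

theorem one_le_hdelta_of_not_bddAbove_card (hK : (realization K).Nonempty)
    (hKb : BddAbove (Finset.card '' K)) (hLb : ¬BddAbove (Finset.card '' L)) :
    1 ≤ hdelta L K := by
  obtain ⟨n, hn⟩ := hKb
  have exists_large_face (N : ℕ) : ∃ F ∈ L, N < F.card := by
    simpa only [Set.exists_mem_image] using not_bddAbove_iff.1 hLb N
  choose F hFL hF using exists_large_face
  have tendsto_card : Filter.Tendsto (fun N => ((F N).card : ℝ)) Filter.atTop Filter.atTop :=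
    tendsto_natCast_atTop_atTop.comp
      (Filter.tendsto_atTop_mono (fun N => (hF N).le) Filter.tendsto_id)
  have tendsto_bound :
      Filter.Tendsto (fun N => 1 - (n : ℝ) / (F N).card) Filter.atTop (nhds 1) := by
    simpa only [sub_zero] using (tendsto_card.const_div_atTop (n : ℝ)).const_sub 1
  refine le_of_tendsto' tendsto_bound fun N => ?_
  have hne : (F N).Nonempty := Finset.card_pos.1 (Nat.zero_lt_of_lt (hF N))
  exact (one_sub_div_card_le_distToSet_barycenter hne hK (Set.forall_mem_image.1 hn)).trans
    (distToSet_le_hdelta (barycenter_mem_realization (hFL N) hne) hK)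

end Barycenter

theorem not_bddAbove_card_image_nonempty {S : Type*} [Infinite S] :
    ¬BddAbove (Finset.card '' {F : Finset S | F.Nonempty}) := by
  refine not_bddAbove_iff.2 fun N => ?_
  obtain ⟨F, hF⟩ := Infinite.exists_subset_card_eq S (N + 1)
  exact ⟨N + 1, ⟨F, Finset.card_pos.1 (hF ▸ N.succ_pos), hF⟩, N.lt_succ_self⟩

theorem stmt14_general {S : Type*} {K L : Set (Finset S)} (hK : ∃ F ∈ K, F.Nonempty)
    (hKb : BddAbove (Finset.card '' K)) (hLb : ¬BddAbove (Finset.card '' L)) :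
    hdist K L = 1 := by
  have hL : ∃ F ∈ L, F.Nonempty := by
    simpa only [Set.exists_mem_image, Finset.card_pos] using not_bddAbove_iff.1 hLb 0
  refine le_antisymm (max_le ?_ ?_) (le_max_of_le_right ?_)
  · exact hdelta_le_one (realization_nonempty hL)
  · exact hdelta_le_one (realization_nonempty hK)
  · exact one_le_hdelta_of_not_bddAbove_card (realization_nonempty hK) hKb hLb

/-- Over an infinite vertex set, every finite-dimensional simplicial complex is
at Hausdorff distance `1` from the full simplex `𝒫*_f(S)` of all nonempty
finite subsets; hence the finite-dimensional complexes are not dense. -/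
theorem stmt14 {S : Type*} [Infinite S] (n : ℕ) (K : Set (Finset S))
    (hK : IsSimplicialComplex K) (hd : ∀ F ∈ K, F.card ≤ n + 1) :
    hdist K {F : Finset S | F.Nonempty} = 1 :=
  stmt14_general (hK.1.imp fun F hF => ⟨hF, hK.2.1 F hF⟩)
    ⟨n + 1, Set.forall_mem_image.2 fun F hF => hd F hF⟩ not_bddAbove_card_image_nonempty
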